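/- The Grigorchuk group, generated by the 5-state automaton over X = {0,1} with states {e,a,b,c,d} and transitions e→(e,e) with trivial output, a→(e,e) swapping 0 and 1, b→(a,c), c→(a,d), d→(e,b) (all with trivial output on X), is strongly contracting: for every word w of length 10 over {a,b,c,d}, the sum over the 8 words x ∈ X³ of the word lengths l_S(w|_x) is strictly less than 10. -/

import Mathlib

/-!
The map `w ↦ w|_x` is compatible with equality of actions, since `w` acts on `x ++ v` by acting on
`x` and then letting `w|_x` act on `v` (`ows_append`). The generators satisfy the relations
`a² = 1` and `{1, b, c, d} ≅ C₂ × C₂`, so every word can be rewritten (`red`) into one in which `a`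
alternates with letters from `{b, c, d}`, without changing its action (`ows_red`) and without
increasing its length (`red_mem`). Hence the sum for `w` is at most the sum of the lengths of the
reduced words `red ((red w)|_x)`, a quantity that depends only on `red w`. There are fewer than two
thousand alternating words of length at most 10, and for each of them this sum, evaluated by the
kernel, is at most 9 (`total_le`).
-/

/-- An automaton (Mealy machine) over alphabet `X` with state set `S`:
transition map `t` and output map `o`. -/
structure Automaton (S X : Type*) where
  t : S → X → S
  o : S → X → X

namespace Automaton

variable {S X : Type*} (A : Automaton S X)

/-- Extended transition map on words: `t(s,ε)=s`, `t(s,xv)=t(t(s,x),v)`. -/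
def tw : S → List X → S
  | s, [] => s
  | s, x :: v => tw (A.t s x) v

/-- Extended output map on words: `o(s,ε)=ε`, `o(s,xv)=o(s,x)·o(t(s,x),v)`. -/
def ow : S → List X → List X
  | _, [] => []
  | s, x :: v => A.o s x :: ow (A.t s x) v

/-- Transition map extended to words of states: `t(sw,v)=t(s,v)·t(w,o(s,v))`. -/
def tws : List S → List X → List S
  | [], _ => []
  | s :: w, v => A.tw s v :: tws w (A.ow s v)

/-- Output map extended to words of states: `o(ε,v)=v`, `o(sw,v)=o(w,o(s,v))`. -/
def ows : List S → List X → List X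
  | [], v => v
  | s :: w, v => ows w (A.ow s v)

end Automaton

/-- States of the Grigorchuk automaton. -/
inductive GriState : Type
  | e | a | b | c | d
  deriving DecidableEq

open GriState in
/-- The Grigorchuk automaton over X = {0,1} (encoded as `Bool`):
`a` swaps the two letters, the other states act trivially on the first letter, with
sections b = (a,c), c = (a,d), d = (e,b), a = (e,e), e = (e,e). -/
def griAutomaton : Automaton GriState Bool where
  t s x :=
    match s, x with
    | e, _ => e
    | a, _ => e
    | b, false => a
    | b, true => c
    | c, false => a
    | c, true => d
    | d, false => e
    | d, true => b
  o s x :=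
    match s with
    | a => !x
    | _ => x

/-- Word length in the Grigorchuk group with respect to S = {a,b,c,d}:
the shortest word over the non-trivial states acting the same on {0,1}*. -/
noncomputable def griLength (w : List GriState) : ℕ :=
  sInf {n | ∃ u : List GriState, u.length = n ∧ (∀ s ∈ u, s ≠ GriState.e) ∧
    ∀ v : List Bool, griAutomaton.ows u v = griAutomaton.ows w v}

namespace Grigorchuk

open GriState

/-! ### Rewriting words to alternating form -/

/-- Multiplication in the Klein four-group `{e, b, c, d}`. The values involving `a` are junk. -/
def mulV : GriState → GriState → GriState
  | e, y => y
  | x, e => x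
  | b, b => e
  | b, c => d
  | b, d => c
  | c, b => d
  | c, c => e
  | c, d => b
  | d, b => c
  | d, c => b
  | d, d => e
  | _, _ => e

/-- Prepend a letter to a word, applying the relations `a² = 1` and those of the Klein four-group
`{e, b, c, d}` at the front. -/
def rcons : GriState → List GriState → List GriState
  | e, w => w
  | s, [] => [s]
  | a, a :: w => w
  | a, x :: w => a :: x :: w
  | s, a :: w => s :: a :: w
  | s, x :: w => match mulV s x with
    | e => w
    | y => y :: w

/-- The alternating form of a word. -/
def red : List GriState → List GriState
  | [] => []
  | s :: w => rcons s (red w)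

lemma ow_e (v : List Bool) : griAutomaton.ow e v = v := by
  induction v with
  | nil => rfl
  | cons x v ih => simpa [Automaton.ow, griAutomaton] using ih

lemma ow_a_a (v : List Bool) : griAutomaton.ow a (griAutomaton.ow a v) = v := by
  cases v with
  | nil => rfl
  | cons x v =>
    have := ow_e v
    simp [griAutomaton] at this
    simp [Automaton.ow, griAutomaton, this]

/-- The relations among `b`, `c`, `d` have to be proved simultaneously, because the section at `1`
permutes these generators cyclically. -/
lemma ow_mulV (v : List Bool) : ∀ s x : GriState, s ≠ a → x ≠ a →
    griAutomaton.ow x (griAutomaton.ow s v) = griAutomaton.ow (mulV s x) v := by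
  induction v with
  | nil => intros; rfl
  | cons t v ih =>
    intro s x hs hx
    have haa := ow_a_a v
    have he := ow_e
    have h1 := ih b b (by decide) (by decide)
    have h2 := ih b c (by decide) (by decide)
    have h3 := ih b d (by decide) (by decide)
    have h4 := ih c b (by decide) (by decide)
    have h5 := ih c c (by decide) (by decide)
    have h6 := ih c d (by decide) (by decide)
    have h7 := ih d b (by decide) (by decide)
    have h8 := ih d c (by decide) (by decide)
    have h9 := ih d d (by decide) (by decide)
    simp only [mulV, griAutomaton] at *
    cases s <;> cases x <;> cases t <;> simp_all [Automaton.ow]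

lemma ows_rcons (s : GriState) (w : List GriState) (v : List Bool) :
    griAutomaton.ows (rcons s w) v = griAutomaton.ows (s :: w) v := by
  have h := ow_mulV v
  rcases w with _ | ⟨x, w⟩
  · cases s <;> simp [rcons, Automaton.ows, ow_e]
  · cases s <;> cases x <;> simp [rcons, mulV, Automaton.ows, ow_e, ow_a_a, h]

lemma ows_red (w : List GriState) (v : List Bool) :
    griAutomaton.ows (red w) v = griAutomaton.ows w v := by
  induction w generalizing v with
  | nil => rfl
  | cons s w ih => rw [red, ows_rcons, Automaton.ows, ih, Automaton.ows]

lemma ne_e_of_mem_rcons (s : GriState) (w : List GriState) (hw : ∀ x ∈ w, x ≠ e) :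
    ∀ x ∈ rcons s w, x ≠ e := by
  rcases w with _ | ⟨x, w⟩
  · cases s <;> simp [rcons]
  · cases s <;> cases x <;> simp_all [rcons, mulV]

lemma ne_e_of_mem_red (w : List GriState) : ∀ x ∈ red w, x ≠ e := by
  induction w with
  | nil => simp [red]
  | cons s w ih => exact ne_e_of_mem_rcons s _ ih

/-! ### Sections -/

lemma length_ow (s : GriState) (v : List Bool) : (griAutomaton.ow s v).length = v.length := by
  induction v generalizing s with
  | nil => rfl
  | cons x v ih => simp [Automaton.ow, ih]

lemma length_ows (w : List GriState) (v : List Bool) :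
    (griAutomaton.ows w v).length = v.length := by
  induction w generalizing v with
  | nil => rfl
  | cons s w ih => simp [Automaton.ows, ih, length_ow]

lemma ow_append (s : GriState) (x v : List Bool) :
    griAutomaton.ow s (x ++ v) = griAutomaton.ow s x ++ griAutomaton.ow (griAutomaton.tw s x) v := by
  induction x generalizing s with
  | nil => rfl
  | cons y x ih => simp [Automaton.ow, Automaton.tw, ih]

lemma ows_append (w : List GriState) (x v : List Bool) :
    griAutomaton.ows w (x ++ v) =
      griAutomaton.ows w x ++ griAutomaton.ows (griAutomaton.tws w x) v := by
  induction w generalizing x v with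
  | nil => rfl
  | cons s w ih => simp [Automaton.ows, Automaton.tws, ow_append, ih]

lemma ows_tws_congr {u w : List GriState}
    (h : ∀ v, griAutomaton.ows u v = griAutomaton.ows w v) (x v : List Bool) :
    griAutomaton.ows (griAutomaton.tws u x) v = griAutomaton.ows (griAutomaton.tws w x) v := by
  have := h (x ++ v)
  rw [ows_append, ows_append] at this
  exact (List.append_inj this (by rw [length_ows, length_ows])).2

lemma griLength_tws_le (w : List GriState) (x : List Bool) :
    griLength (griAutomaton.tws w x) ≤ (red (griAutomaton.tws (red w) x)).length :=
  Nat.sInf_le ⟨_, rfl, ne_e_of_mem_red _, fun v => by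
    rw [ows_red]; exact ows_tws_congr (ows_red w) x v⟩

/-! ### Enumeration of alternating words -/

/-- The alternating words of length at most `n` that are empty or start with `a` (second argument
`true`), respectively with one of `b`, `c`, `d` (second argument `false`). -/
def gen : ℕ → Bool → List (List GriState)
  | 0, _ => [[]]
  | n + 1, true => [] :: (gen n false).map (a :: ·)
  | n + 1, false => [] :: (gen n true).flatMap fun w => [b :: w, c :: w, d :: w]

lemma nil_mem_gen (n : ℕ) (p : Bool) : [] ∈ gen n p := by
  cases n <;> cases p <;> simp [gen]

lemma gen_succ {n : ℕ} {p : Bool} {w : List GriState} (h : w ∈ gen n p) : w ∈ gen (n + 1) p := by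
  induction n generalizing p w with
  | zero =>
    have : w = [] := by simpa [gen] using h
    exact this ▸ nil_mem_gen _ _
  | succ n ih =>
    cases p
    · rw [gen] at h ⊢
      simp only [List.mem_cons, List.mem_flatMap] at h ⊢
      exact h.imp_right fun ⟨u, hu, hw⟩ => ⟨u, ih hu, hw⟩
    · rw [gen] at h ⊢
      simp only [List.mem_cons, List.mem_map] at h ⊢
      exact h.imp_right fun ⟨u, hu, hw⟩ => ⟨u, ih hu, hw⟩

lemma rcons_mem {n : ℕ} {p : Bool} {w : List GriState} (s : GriState) (h : w ∈ gen n p) :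
    ∃ q, rcons s w ∈ gen (n + 1) q := by
  rcases w with _ | ⟨x, w⟩
  · cases s
    case e => exact ⟨p, nil_mem_gen _ _⟩
    case a => exact ⟨true, by simp [rcons, gen, nil_mem_gen]⟩
    all_goals exact ⟨false, by simp [rcons, gen, nil_mem_gen]⟩
  · have h' := gen_succ h
    rcases n with _ | n
    · simp [gen] at h
    cases p
    · have hw : w ∈ gen n true ∧ (x = b ∨ x = c ∨ x = d) := by
        simp [gen] at h
        grind
      have hw2 := gen_succ hw.1
      have hw3 := gen_succ hw2
      cases s
      case e => exact ⟨false, h'⟩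
      case a =>
        refine ⟨true, ?_⟩
        rcases hw.2 with rfl | rfl | rfl <;> rw [gen] <;> simpa [rcons] using h
      all_goals
        rcases hw.2 with rfl | rfl | rfl <;> first
          | exact ⟨true, hw3⟩
          | exact ⟨false, by rw [gen]; simp [rcons, mulV, hw2]⟩
    · have hw : w ∈ gen n false ∧ x = a := by
        simp [gen] at h
        grind
      have hw3 := gen_succ (gen_succ hw.1)
      obtain ⟨hw1, rfl⟩ := hw
      cases s
      case e => exact ⟨true, h'⟩
      case a => exact ⟨false, hw3⟩
      all_goals exact ⟨false, by rw [gen]; simp [rcons, h]⟩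

lemma red_mem (w : List GriState) : ∃ p, red w ∈ gen w.length p := by
  induction w with
  | nil => exact ⟨true, nil_mem_gen _ _⟩
  | cons s w ih =>
    obtain ⟨p, hp⟩ := ih
    exact rcons_mem s hp

/-! ### The finite computation -/

/-- The sum of the lengths of the alternating forms of the sections of `w` at the words of
length 3. -/
def total (w : List GriState) : ℕ :=
  (red (griAutomaton.tws w [false, false, false])).length +
  (red (griAutomaton.tws w [false, false, true])).length +
  (red (griAutomaton.tws w [false, true, false])).length +
  (red (griAutomaton.tws w [false, true, true])).length +
  (red (griAutomaton.tws w [true, false, false])).length +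
  (red (griAutomaton.tws w [true, false, true])).length +
  (red (griAutomaton.tws w [true, true, false])).length +
  (red (griAutomaton.tws w [true, true, true])).length

lemma total_le : ∀ p, (gen 10 p).all (fun w => Nat.ble (total w) 9) = true := by
  decide +kernel

lemma sum_eq (F : List Bool → ℕ) : ∑ f : Fin 3 → Bool, F (List.ofFn f) =
    F [false, false, false] + F [false, false, true] + F [false, true, false] +
    F [false, true, true] + F [true, false, false] + F [true, false, true] +
    F [true, true, false] + F [true, true, true] := by
  have h : (Finset.univ : Finset (Fin 3 → Bool)) =
      {![false, false, false], ![false, false, true], ![false, true, false],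
       ![false, true, true], ![true, false, false], ![true, false, true],
       ![true, true, false], ![true, true, true]} := by decide
  rw [h]
  repeat rw [Finset.sum_insert (by decide)]
  simp [add_assoc]

end Grigorchuk

theorem grigorchuk_strongly_contracting :
    ∀ w : List GriState, w.length = 10 → (∀ s ∈ w, s ≠ GriState.e) →
      ∑ f : Fin 3 → Bool, griLength (griAutomaton.tws w (List.ofFn f)) < 10 := by
  intro w hw _
  obtain ⟨p, hp⟩ := Grigorchuk.red_mem w
  rw [hw] at hp
  have h := Nat.le_of_ble_eq_true (List.all_eq_true.1 (Grigorchuk.total_le p) _ hp)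
  refine Nat.lt_succ_of_le (le_trans ?_ h)
  refine (Finset.sum_le_sum fun f _ => Grigorchuk.griLength_tws_le w (List.ofFn f)).trans
    (Grigorchuk.sum_eq fun x =>
      (Grigorchuk.red (griAutomaton.tws (Grigorchuk.red w) x)).length).le
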